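/- arXiv:0707.2672 — 3 statements merged into one kernel-verified Lean document; each statement's English description precedes it below -/
import Mathlib

section
/- Let Q ∈ ℂ[z_1, z_2] be a product Q = ∏_{i=1}^n (a_i z_1 + b_i z_2) of n ≥ 1 nonzero linear forms that are pairwise non-proportional (i.e., {Q = 0} is a union of n distinct lines through the origin). Then the ideal generated by the two partial derivatives of Q together with z_2 equals (z_1^{n-1}, z_2): that is, (∂Q/∂z_1, ∂Q/∂z_2, z_2) = (z_1^{n-1}, z_2) as ideals of ℂ[z_1, z_2]. -/
/-!
Modulo `z₂`, each form `lin (a j)` becomes `(a j) 0 • z₁`, so by the Leibniz rule both partial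
derivatives of `Q` become scalar multiples of `z₁ ^ (n - 1)` (`pderiv_prod_lin`). The scalars are
`∂₁Q(1, 0)` and `∂₂Q(1, 0)`, and they do not both vanish (`coeff_ne_zero`), since at most one of
the lines is `z₂ = 0`. Dividing by the nonzero scalar puts `z₁ ^ (n - 1)` in the Jacobian ideal
plus `(z₂)`.
-/

open MvPolynomial

/-- The linear form `a 0 • z₁ + a 1 • z₂` with coefficient vector `a`, as a polynomial. -/
noncomputable def lin (a : Fin 2 → ℂ) : MvPolynomial (Fin 2) ℂ :=
  ∑ k, C (a k) * X k

lemma pderiv_finset_prod {ι : Type*} [DecidableEq ι] (k : Fin 2) (s : Finset ι)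
    (f : ι → MvPolynomial (Fin 2) ℂ) :
    pderiv k (∏ i ∈ s, f i) = ∑ i ∈ s, pderiv k (f i) * ∏ j ∈ s.erase i, f j := by
  induction s using Finset.induction_on with
  | empty => simp
  | insert b s hb ih =>
    rw [Finset.prod_insert hb, pderiv_mul, ih, Finset.sum_insert hb, Finset.erase_insert hb,
      Finset.mul_sum]
    congr 1
    refine Finset.sum_congr rfl fun i hi => ?_
    rw [Finset.erase_insert_of_ne (ne_of_mem_of_not_mem hi hb).symm,
      Finset.prod_insert (fun h => hb (Finset.mem_of_mem_erase h))]
    ring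

/-- Modulo `z₂`, the derivative in direction `k` of `∏ i, lin (a i)` is a scalar multiple of
a power of `z₁`. The scalar is `∑ i, (a i) k * ∏ j ≠ i, (a j) 0`, by the Leibniz rule
and `lin (a j) ≡ (a j) 0 • z₁`. -/
lemma pderiv_prod_lin {n : ℕ} (a : Fin n → Fin 2 → ℂ) (k : Fin 2) :
    ∃ q : MvPolynomial (Fin 2) ℂ, pderiv k (∏ i, lin (a i)) =
      C (∑ i, a i k * ∏ j ∈ Finset.univ.erase i, a j 0) * X 0 ^ (n - 1) + q * X 1 := by
  have hd (i : Fin n) : pderiv k (lin (a i)) = C (a i k) := by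
    simp only [lin, Fin.sum_univ_two, map_add, pderiv_C_mul, pderiv_X]
    fin_cases k <;> simp
  have hl (j : Fin n) : Ideal.Quotient.mk (Ideal.span {(X 1 : MvPolynomial (Fin 2) ℂ)})
      (lin (a j)) = Ideal.Quotient.mk _ (C (a j 0) * X 0) := by
    rw [Ideal.Quotient.eq, Ideal.mem_span_singleton']
    exact ⟨C (a j 1), by simp [lin, Fin.sum_univ_two]⟩
  have key : pderiv k (∏ i, lin (a i)) -
      C (∑ i, a i k * ∏ j ∈ Finset.univ.erase i, a j 0) * X 0 ^ (n - 1) ∈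
      Ideal.span {(X 1 : MvPolynomial (Fin 2) ℂ)} := by
    rw [← Ideal.Quotient.eq, pderiv_finset_prod]
    simp only [hd, map_sum, map_mul, map_prod, hl, map_pow]
    simp only [Finset.prod_mul_distrib, Finset.prod_const, Finset.sum_mul,
      Finset.card_erase_of_mem (Finset.mem_univ _), Finset.card_univ, Fintype.card_fin]
    exact Finset.sum_congr rfl fun i _ => by ring
  obtain ⟨q, hq⟩ := Ideal.mem_span_singleton'.1 key
  exact ⟨q, by rw [hq]; ring⟩

/-- The two scalars are the partial derivatives of `Q` at `(1, 0)`. If every `(a i) 0` is nonzero,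
the first is `n * ∏ i, (a i) 0`; otherwise exactly one line is `z₂ = 0`, and the second reduces
to a single nonzero summand. -/
lemma coeff_ne_zero {n : ℕ} (hn : 1 ≤ n) (a : Fin n → Fin 2 → ℂ) (ha0 : ∀ i, a i ≠ 0)
    (haprop : ∀ i j, i ≠ j → ∀ c : ℂ, a i ≠ c • a j) :
    ∃ k : Fin 2, ∑ i, a i k * ∏ j ∈ Finset.univ.erase i, a j 0 ≠ 0 := by
  by_cases h : ∀ i, a i 0 ≠ 0
  · refine ⟨0, ?_⟩
    simp only [Finset.mul_prod_erase Finset.univ (fun j => a j 0) (Finset.mem_univ _),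
      Finset.sum_const, Finset.card_univ, Fintype.card_fin, nsmul_eq_mul]
    exact mul_ne_zero (by exact_mod_cast (by lia : n ≠ 0)) (Finset.prod_ne_zero_iff.2 fun i _ => h i)
  · push Not at h
    obtain ⟨i, hi⟩ := h
    have hi1 : a i 1 ≠ 0 := fun h1 => ha0 i (by ext k; fin_cases k <;> simp [hi, h1])
    have hj (j : Fin n) (hji : j ≠ i) : a j 0 ≠ 0 := fun h0 =>
      haprop j i hji (a j 1 / a i 1) (by ext k; fin_cases k <;> simp [hi, h0, hi1])
    refine ⟨1, ?_⟩
    rw [Finset.sum_eq_single i]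
    · exact mul_ne_zero hi1 (Finset.prod_ne_zero_iff.2 fun j hj' => hj j (Finset.ne_of_mem_erase hj'))
    · intro j _ hji
      rw [Finset.prod_eq_zero (Finset.mem_erase.2 ⟨hji.symm, Finset.mem_univ i⟩) hi, mul_zero]
    · simp

/-- For a product `Q` of `n ≥ 1` pairwise non-proportional nonzero linear forms in two
variables, the ideal generated by the partial derivatives of `Q` together with `z₂`
equals `(z₁^{n-1}, z₂)`. -/
theorem jacobian_plus_line_eq_power_ideal
    {n : ℕ} (hn : 1 ≤ n)
    (a : Fin n → Fin 2 → ℂ)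
    (ha0 : ∀ i, a i ≠ 0)
    (haprop : ∀ i j, i ≠ j → ∀ c : ℂ, a i ≠ c • a j) :
    Ideal.span ({pderiv 0 (∏ i, lin (a i)), pderiv 1 (∏ i, lin (a i)), X 1} :
        Set (MvPolynomial (Fin 2) ℂ))
      = Ideal.span ({(X 0) ^ (n - 1), X 1} : Set (MvPolynomial (Fin 2) ℂ)) := by
  have hmem (k : Fin 2) : pderiv k (∏ i, lin (a i)) ∈
      Ideal.span ({(X 0) ^ (n - 1), X 1} : Set (MvPolynomial (Fin 2) ℂ)) := by
    obtain ⟨q, hq⟩ := pderiv_prod_lin a k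
    exact Ideal.mem_span_pair.2 ⟨_, q, hq.symm⟩
  apply le_antisymm
  · rw [Ideal.span_le]
    rintro p (rfl | rfl | rfl)
    · exact hmem 0
    · exact hmem 1
    · exact Ideal.subset_span (by simp)
  · set J := Ideal.span ({pderiv 0 (∏ i, lin (a i)), pderiv 1 (∏ i, lin (a i)), X 1} :
      Set (MvPolynomial (Fin 2) ℂ)) with hJ
    have hX : (X 1 : MvPolynomial (Fin 2) ℂ) ∈ J := Ideal.subset_span (by simp)
    rw [Ideal.span_le]
    rintro p (rfl | rfl)
    · obtain ⟨k, hk⟩ := coeff_ne_zero hn a ha0 haprop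
      obtain ⟨q, hq⟩ := pderiv_prod_lin a k
      have hQ : pderiv k (∏ i, lin (a i)) ∈ J :=
        Ideal.subset_span (by fin_cases k <;> simp)
      rw [hq, Ideal.add_mem_iff_left _ (J.mul_mem_left q hX)] at hQ
      have h := J.mul_mem_left (C (∑ i, a i k * ∏ j ∈ Finset.univ.erase i, a j 0)⁻¹) hQ
      rwa [← mul_assoc, ← C_mul, inv_mul_cancel₀ hk, C_1, one_mul] at h
    · exact hX
end

section
/- Let Q ∈ ℂ[z_1, z_2] be a product Q = ∏_{i=1}^n (a_i z_1 + b_i z_2) of n ≥ 1 nonzero linear forms that are pairwise non-proportional (i.e., {Q = 0} is a union of n distinct lines through the origin). Then the quotient ring ℂ[z_1, z_2]/(∂Q/∂z_1, ∂Q/∂z_2, z_2) is a finite-dimensional ℂ-vector space of dimension n − 1. -/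
/-!
Setting `z₂ = 0` identifies `ℂ[z₁, z₂]/(z₂)` with `ℂ[x]`. Each `∂Q/∂z_k` becomes, by the Leibniz
rule, the monomial `c_k x^(n-1)` with `c_k = ∑ i, a i k * ∏ j ≠ i, a j 0`. The numbers `c_0`, `c_1`
are not both zero: if no line is `{z₂ = 0}`, then all `a i 0` are nonzero and `c_0 = n ∏ i, a i 0`;
otherwise exactly one line `i₀` has `a i₀ 0 = 0`, and `c_1 = a i₀ 1 * ∏ j ≠ i₀, a j 0 ≠ 0`. Hence the
quotient is `ℂ[x]/(x^(n-1))`, of dimension `n - 1`.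
-/

open MvPolynomial

/-- Restriction of a polynomial to the line `z₂ = 0`. -/
noncomputable def restrictLine : MvPolynomial (Fin 2) ℂ →ₐ[ℂ] Polynomial ℂ :=
  aeval ![Polynomial.X, 0]

/-- The coefficient `c_k` of `x ^ (n - 1)` in the restriction of `∂Q/∂z_k` to `z₂ = 0`. -/
noncomputable def restrictCoeff {n : ℕ} (a : Fin n → Fin 2 → ℂ) (k : Fin 2) : ℂ :=
  ∑ i, (∏ j ∈ Finset.univ.erase i, a j 0) * a i k

lemma restrictLine_lin (b : Fin 2 → ℂ) :
    restrictLine (lin b) = Polynomial.C (b 0) * Polynomial.X := by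
  simp [restrictLine, lin, Polynomial.algebraMap_eq]

lemma pderiv_lin (b : Fin 2 → ℂ) (k : Fin 2) : pderiv k (lin b) = C (b k) := by
  fin_cases k <;> simp [lin, pderiv_X]

lemma pderiv_prod {ι : Type*} [DecidableEq ι] (s : Finset ι)
    (f : ι → MvPolynomial (Fin 2) ℂ) (k : Fin 2) :
    pderiv k (∏ i ∈ s, f i) = ∑ i ∈ s, (∏ j ∈ s.erase i, f j) * pderiv k (f i) := by
  induction s using Finset.induction_on with
  | empty => simp
  | insert x s hx ih =>
    rw [Finset.prod_insert hx, Derivation.leibniz, ih, Finset.sum_insert hx,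
      Finset.erase_insert hx, smul_eq_mul, smul_eq_mul, Finset.mul_sum, add_comm]
    congr 1
    refine Finset.sum_congr rfl fun i hi => ?_
    have hne : x ≠ i := fun h => hx (h ▸ hi)
    rw [Finset.erase_insert_of_ne hne, Finset.prod_insert (by simp [hx]), mul_assoc]

lemma restrictLine_pderiv {n : ℕ} (a : Fin n → Fin 2 → ℂ) (k : Fin 2) :
    restrictLine (pderiv k (∏ i, lin (a i)))
      = Polynomial.C (restrictCoeff a k) * Polynomial.X ^ (n - 1) := by
  have hC (c : ℂ) : restrictLine (C c) = Polynomial.C c := by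
    simp [restrictLine, Polynomial.algebraMap_eq]
  rw [pderiv_prod, restrictCoeff, map_sum, map_sum, Finset.sum_mul]
  refine Finset.sum_congr rfl fun i _ => ?_
  simp only [map_mul, map_prod, restrictLine_lin, pderiv_lin, hC, Finset.prod_mul_distrib,
    Finset.prod_const, Finset.card_erase_of_mem (Finset.mem_univ i), Finset.card_univ,
    Fintype.card_fin]
  ring

lemma exists_restrictCoeff_ne_zero {n : ℕ} (hn : 1 ≤ n) (a : Fin n → Fin 2 → ℂ)
    (ha0 : ∀ i, a i ≠ 0) (haprop : ∀ i j, i ≠ j → ∀ c : ℂ, a i ≠ c • a j) :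
    ∃ k, restrictCoeff a k ≠ 0 := by
  by_cases h : ∀ i, a i 0 ≠ 0
  · refine ⟨0, ?_⟩
    have : restrictCoeff a 0 = n * ∏ i, a i 0 := by
      simp [restrictCoeff, Finset.prod_erase_mul]
    rw [this]
    exact mul_ne_zero (by exact_mod_cast (by omega : n ≠ 0))
      (Finset.prod_ne_zero_iff.2 fun i _ => h i)
  · push Not at h
    obtain ⟨i, hi⟩ := h
    have hi1 : a i 1 ≠ 0 := fun h1 => ha0 i (by ext k; fin_cases k <;> simp [hi, h1])
    refine ⟨1, ?_⟩
    rw [restrictCoeff, Finset.sum_eq_single i]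
    · refine mul_ne_zero (Finset.prod_ne_zero_iff.2 fun j hj hj0 => ?_) hi1
      refine haprop j i (Finset.ne_of_mem_erase hj) (a j 1 / a i 1) ?_
      ext k
      fin_cases k
      · simp [hi, hj0]
      · simp [hi1]
    · intro j _ hji
      rw [Finset.prod_eq_zero (i := i) (by simp [hji.symm]) hi, zero_mul]
    · simp

/-- For a product `Q` of `n ≥ 1` pairwise non-proportional nonzero linear forms in two
variables, the quotient `ℂ[z₁, z₂]/(∂Q/∂z₁, ∂Q/∂z₂, z₂)` has ℂ-dimension `n - 1`. -/
theorem finrank_quotient_jacobian_plus_line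
    {n : ℕ} (hn : 1 ≤ n)
    (a : Fin n → Fin 2 → ℂ)
    (ha0 : ∀ i, a i ≠ 0)
    (haprop : ∀ i j, i ≠ j → ∀ c : ℂ, a i ≠ c • a j) :
    Module.finrank ℂ (MvPolynomial (Fin 2) ℂ ⧸
        Ideal.span ({pderiv 0 (∏ i, lin (a i)), pderiv 1 (∏ i, lin (a i)), X 1} :
          Set (MvPolynomial (Fin 2) ℂ)))
      = n - 1 := by
  set I := Ideal.span ({pderiv 0 (∏ i, lin (a i)), pderiv 1 (∏ i, lin (a i)), X 1} :
          Set (MvPolynomial (Fin 2) ℂ)) with hI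
  let K : Ideal (Polynomial ℂ) := Ideal.span {Polynomial.X ^ (n - 1)}
  let ψ : Polynomial ℂ →ₐ[ℂ] MvPolynomial (Fin 2) ℂ := Polynomial.aeval (X 0)
  let f : MvPolynomial (Fin 2) ℂ →ₐ[ℂ] Polynomial ℂ ⧸ K :=
    (Ideal.Quotient.mkₐ ℂ K).comp restrictLine
  have hψ : restrictLine.comp ψ = AlgHom.id ℂ _ := by
    ext; simp [ψ, restrictLine]
  have hsurj : Function.Surjective f :=
    (Ideal.Quotient.mkₐ_surjective ℂ K).comp fun p => ⟨ψ p, DFunLike.congr_fun hψ p⟩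
  have hd (k : Fin 2) : pderiv k (∏ i, lin (a i)) ∈ I := by
    apply Ideal.subset_span
    fin_cases k <;> simp
  have hX : (X 1 : MvPolynomial (Fin 2) ℂ) ∈ I := Ideal.subset_span (by simp)
  -- Modulo `I ∋ z₂`, a polynomial agrees with its restriction to `z₂ = 0`.
  have hmod (p : MvPolynomial (Fin 2) ℂ) :
      Ideal.Quotient.mk I (ψ (restrictLine p)) = Ideal.Quotient.mk I p := by
    have : ((Ideal.Quotient.mkₐ ℂ I).comp ψ).comp restrictLine = Ideal.Quotient.mkₐ ℂ I := by
      apply MvPolynomial.algHom_ext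
      intro k
      fin_cases k
      · simp [ψ, restrictLine]
      · simpa [ψ, restrictLine] using (Ideal.Quotient.eq_zero_iff_mem.2 hX).symm
    exact DFunLike.congr_fun this p
  -- Some `c_k` is invertible, so `∂Q/∂z_k ≡ c_k z₁ ^ (n - 1)` forces `z₁ ^ (n - 1) ∈ I`.
  have hpow : ψ (Polynomial.X ^ (n - 1)) ∈ I := by
    obtain ⟨k, hk⟩ := exists_restrictCoeff_ne_zero hn a ha0 haprop
    have h := hmod (pderiv k (∏ i, lin (a i)))
    rw [Ideal.Quotient.eq_zero_iff_mem.2 (hd k), Ideal.Quotient.eq_zero_iff_mem,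
      restrictLine_pderiv] at h
    have h2 := I.mul_mem_left (ψ (Polynomial.C (restrictCoeff a k)⁻¹)) h
    rwa [← map_mul, ← mul_assoc, ← Polynomial.C_mul, inv_mul_cancel₀ hk, Polynomial.C_1,
      one_mul] at h2
  have hker : I = RingHom.ker f := by
    apply le_antisymm
    · have hm (k : Fin 2) : pderiv k (∏ i, lin (a i)) ∈ RingHom.ker f := by
        change Ideal.Quotient.mk K (restrictLine _) = 0
        rw [restrictLine_pderiv, Ideal.Quotient.eq_zero_iff_mem]
        exact K.mul_mem_left _ (Ideal.mem_span_singleton_self _)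
      rw [hI, Ideal.span_le]
      rintro _ (rfl | rfl | rfl)
      · exact hm 0
      · exact hm 1
      · change Ideal.Quotient.mk K (restrictLine _) = 0
        simp [restrictLine]
    · intro p hp
      change Ideal.Quotient.mk K (restrictLine p) = 0 at hp
      rw [Ideal.Quotient.eq_zero_iff_mem, Ideal.mem_span_singleton] at hp
      obtain ⟨q, hq⟩ := hp
      rw [← Ideal.Quotient.eq_zero_iff_mem, ← hmod p, Ideal.Quotient.eq_zero_iff_mem, hq, map_mul]
      exact I.mul_mem_right _ hpow
  rw [hker, (Ideal.quotientKerAlgEquivOfSurjective hsurj).toLinearEquiv.finrank_eq,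
    finrank_quotient_span_eq_natDegree, Polynomial.natDegree_X_pow]
end

section
/- In S = ℂ[z_1, z_2, z_3], let Q_1 = z_1 z_2 z_3 (z_1 + z_2 − z_3) and Q_2 = Q_1 · (z_1 − z_3). Then the radicals of the two Jacobian ideals are equal, and explicitly √(J(Q_1)) = √(J(Q_2)) = (z_1, z_2) ∩ (z_1, z_2 − z_3) ∩ (z_2, z_1 − z_3) ∩ (z_1, z_3) ∩ (z_2, z_3) ∩ (z_1 + z_2, z_3). In particular, the radical of the Jacobian ideal does not determine the arrangement (it does not even determine the number of hyperplanes). -/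
/-!
The zero locus of `jac Q` is the singular locus of the arrangement: by Euler's formula some linear
form of `Q` vanishes at a common zero of the partial derivatives, and the product rule then forces
a second form to vanish there. The plane `z₁ = z₃` contains no codimension-two intersection that
is not already one of the six lines of the first arrangement (it passes through `z₁ = z₃ = 0`
and `z₂ = z₁ - z₃ = 0`), so both singular loci are the same union of six lines.

To turn this into a statement about ideals, points are taken with values in arbitrary domains `D`
over `ℂ` (`OnSixLines`). The quotients `D = S ⧸ P` by primes
`P ⊇ jac Q` show that each such `P` contains one of the six ideals, hence the intersection lies
in the radical. The generic points of the six lines show that `jac Q` lies in each of the six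
ideals, which are prime, being kernels of substitution homomorphisms (`mem_iff_aeval_eq_zero`).
-/

open MvPolynomial

/-- The Jacobian ideal of a polynomial `Q ∈ ℂ[z₁, z₂, z₃]`. -/
noncomputable def jac (Q : MvPolynomial (Fin 3) ℂ) : Ideal (MvPolynomial (Fin 3) ℂ) :=
  Ideal.span (Set.range fun k => pderiv k Q)

/-- The point `(x, y, z)` lies on one of the six lines where two of the planes
`x = 0`, `y = 0`, `z = 0`, `x + y - z = 0` meet. -/
def OnSixLines {D : Type} [CommRing D] (x y z : D) : Prop :=
  (x = 0 ∧ y = 0) ∨ (x = 0 ∧ y - z = 0) ∨ (y = 0 ∧ x - z = 0) ∨ (x = 0 ∧ z = 0) ∨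
    (y = 0 ∧ z = 0) ∨ (x + y = 0 ∧ z = 0)

/-- If substituting `v` kills `a` and `b`, and `v` is the identity modulo `(a, b)`, then
`(a, b)` is the kernel of the substitution. -/
lemma mem_iff_aeval_eq_zero (a b : MvPolynomial (Fin 3) ℂ) (v : Fin 3 → MvPolynomial (Fin 3) ℂ)
    (ha : aeval v a = 0) (hb : aeval v b = 0)
    (hv : ∀ j, X j - v j ∈ Ideal.span {a, b}) (f : MvPolynomial (Fin 3) ℂ) :
    f ∈ Ideal.span {a, b} ↔ aeval v f = 0 := by
  constructor
  · intro hf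
    obtain ⟨s, t, rfl⟩ := Ideal.mem_span_pair.1 hf
    rw [map_add, map_mul, map_mul, ha, hb, mul_zero, mul_zero, add_zero]
  · intro hf
    have key : (Ideal.Quotient.mkₐ ℂ (Ideal.span {a, b})).comp (aeval v)
        = Ideal.Quotient.mkₐ ℂ (Ideal.span {a, b}) := by
      ext j
      simpa using (Ideal.Quotient.eq.2 (hv j)).symm
    have h := DFunLike.congr_fun key f
    rw [AlgHom.comp_apply, hf, map_zero] at h
    exact Ideal.Quotient.eq_zero_iff_mem.1 h.symm

/-- The generic point `v` of the line cut out by `a` and `b` transfers singularity of the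
arrangement along that line to an inclusion of ideals. -/
lemma radical_jac_le (Q a b : MvPolynomial (Fin 3) ℂ) (v : Fin 3 → MvPolynomial (Fin 3) ℂ)
    (ha : aeval v a = 0) (hb : aeval v b = 0)
    (hv : ∀ j, X j - v j ∈ Ideal.span {a, b}) (hQ : ∀ k, aeval v (pderiv k Q) = 0) :
    (jac Q).radical ≤ Ideal.span {a, b} := by
  have hmem := mem_iff_aeval_eq_zero a b v ha hb hv
  have hJ : jac Q ≤ Ideal.span {a, b} := by
    refine Ideal.span_le.2 ?_
    rintro _ ⟨k, rfl⟩
    exact (hmem _).2 (hQ k)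
  rintro f ⟨n, hn⟩
  have h := (hmem _).1 (hJ hn)
  rw [map_pow] at h
  exact (hmem f).2 (eq_zero_of_pow_eq_zero h)

/-- If the common zeros of the partial derivatives of `Q` are the six lines, for points with
values in any domain over `ℂ`, then the radical of `jac Q` is the intersection of the ideals of
these lines. -/
lemma radical_jac_eq (Q : MvPolynomial (Fin 3) ℂ)
    (h : ∀ (D : Type) [CommRing D] [IsDomain D] [Algebra ℂ D] (v : Fin 3 → D),
      (∀ k, aeval v (pderiv k Q) = 0) ↔ OnSixLines (v 0) (v 1) (v 2)) :
    (jac Q).radical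
        = Ideal.span ({X 0, X 1} : Set (MvPolynomial (Fin 3) ℂ))
          ⊓ Ideal.span ({X 0, X 1 - X 2} : Set (MvPolynomial (Fin 3) ℂ))
          ⊓ Ideal.span ({X 1, X 0 - X 2} : Set (MvPolynomial (Fin 3) ℂ))
          ⊓ Ideal.span ({X 0, X 2} : Set (MvPolynomial (Fin 3) ℂ))
          ⊓ Ideal.span ({X 1, X 2} : Set (MvPolynomial (Fin 3) ℂ))
          ⊓ Ideal.span ({X 0 + X 1, X 2} : Set (MvPolynomial (Fin 3) ℂ)) := by
  apply le_antisymm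
  · refine le_inf (le_inf (le_inf (le_inf (le_inf ?_ ?_) ?_) ?_) ?_) ?_
    · refine radical_jac_le Q _ _ ![0, 0, X 2] (by simp) (by simp) ?_
        ((h _ _).2 (by simp [OnSixLines]))
      intro j
      rw [Ideal.mem_span_pair]
      fin_cases j
      · exact ⟨1, 0, by simp⟩
      · exact ⟨0, 1, by simp⟩
      · exact ⟨0, 0, by simp⟩
    · refine radical_jac_le Q _ _ ![0, X 2, X 2] (by simp) (by simp) ?_
        ((h _ _).2 (by simp [OnSixLines]))
      intro j
      rw [Ideal.mem_span_pair]
      fin_cases j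
      · exact ⟨1, 0, by simp⟩
      · exact ⟨0, 1, by simp⟩
      · exact ⟨0, 0, by simp⟩
    · refine radical_jac_le Q _ _ ![X 2, 0, X 2] (by simp) (by simp) ?_
        ((h _ _).2 (by simp [OnSixLines]))
      intro j
      rw [Ideal.mem_span_pair]
      fin_cases j
      · exact ⟨0, 1, by simp⟩
      · exact ⟨1, 0, by simp⟩
      · exact ⟨0, 0, by simp⟩
    · refine radical_jac_le Q _ _ ![0, X 1, 0] (by simp) (by simp) ?_
        ((h _ _).2 (by simp [OnSixLines]))
      intro j
      rw [Ideal.mem_span_pair]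
      fin_cases j
      · exact ⟨1, 0, by simp⟩
      · exact ⟨0, 0, by simp⟩
      · exact ⟨0, 1, by simp⟩
    · refine radical_jac_le Q _ _ ![X 0, 0, 0] (by simp) (by simp) ?_
        ((h _ _).2 (by simp [OnSixLines]))
      intro j
      rw [Ideal.mem_span_pair]
      fin_cases j
      · exact ⟨0, 0, by simp⟩
      · exact ⟨1, 0, by simp⟩
      · exact ⟨0, 1, by simp⟩
    · refine radical_jac_le Q _ _ ![X 0, -X 0, 0] (by simp) (by simp) ?_
        ((h _ _).2 (by simp [OnSixLines]))
      intro j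
      rw [Ideal.mem_span_pair]
      fin_cases j
      · exact ⟨0, 0, by simp⟩
      · exact ⟨1, 0, by simp; ring⟩
      · exact ⟨0, 1, by simp⟩
  · intro f hf
    simp only [Ideal.mem_inf] at hf
    obtain ⟨⟨⟨⟨⟨h1, h2⟩, h3⟩, h4⟩, h5⟩, h6⟩ := hf
    rw [Ideal.radical_eq_sInf, Ideal.mem_sInf]
    rintro P ⟨hJP, hP⟩
    -- `v` is the tautological point with values in the domain `S ⧸ P`.
    let v : Fin 3 → MvPolynomial (Fin 3) ℂ ⧸ P := fun j => Ideal.Quotient.mk P (X j)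
    have hv : ∀ g, aeval v g = Ideal.Quotient.mk P g := by
      intro g
      have : aeval v = Ideal.Quotient.mkₐ ℂ P := by
        ext j
        simp [v]
      rw [this]
      rfl
    have hS : OnSixLines (v 0) (v 1) (v 2) := by
      refine (h _ v).1 fun k => ?_
      rw [hv]
      exact Ideal.Quotient.eq_zero_iff_mem.2 (hJP (Ideal.subset_span ⟨k, rfl⟩))
    have key : ∀ a b : MvPolynomial (Fin 3) ℂ, f ∈ Ideal.span {a, b} →
        Ideal.Quotient.mk P a = 0 → Ideal.Quotient.mk P b = 0 → f ∈ P := by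
      intro a b hf ha hb
      refine Ideal.span_le.2 ?_ hf
      rintro g (rfl | rfl)
      · exact Ideal.Quotient.eq_zero_iff_mem.1 ha
      · exact Ideal.Quotient.eq_zero_iff_mem.1 hb
    rcases hS with ⟨ha, hb⟩ | ⟨ha, hb⟩ | ⟨ha, hb⟩ | ⟨ha, hb⟩ | ⟨ha, hb⟩ | ⟨ha, hb⟩
    · exact key _ _ h1 ha hb
    · exact key _ _ h2 ha (by simpa [v] using hb)
    · exact key _ _ h3 ha (by simpa [v] using hb)
    · exact key _ _ h4 ha hb
    · exact key _ _ h5 ha hb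
    · exact key _ _ h6 (by simpa [v] using ha) hb

/-- The singular points of the arrangement of four planes. -/
lemma singular_iff_four {D : Type} [CommRing D] [IsDomain D] [Algebra ℂ D] (v : Fin 3 → D) :
    (∀ k, aeval v (pderiv k
      (X 0 * X 1 * X 2 * (X 0 + X 1 - X 2) : MvPolynomial (Fin 3) ℂ)) = 0) ↔
      OnSixLines (v 0) (v 1) (v 2) := by
  have : CharZero D := charZero_of_injective_algebraMap (algebraMap ℂ D).injective
  simp only [Fin.forall_fin_succ, Derivation.leibniz, map_add, map_sub, pderiv_X, OnSixLines]
  simp [Pi.single_apply]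
  generalize v 0 = x
  generalize v 1 = y
  generalize v 2 = z
  constructor
  · rintro ⟨hx, hy, hz⟩
    -- Euler's formula; each of the resulting cases kills all but one term of a partial derivative.
    have hE : (4 : D) * (x * y * z * (x + y - z)) = 0 := by
      linear_combination x * hx + y * hy + z * hz
    simp only [mul_eq_zero, OfNat.ofNat_ne_zero, false_or] at hE
    rcases hE with ((h | h) | h) | h
    · have : y * z * (y - z) = 0 := by subst h; linear_combination hx
      simp only [mul_eq_zero] at this
      grind only
    · have : x * z * (x - z) = 0 := by subst h; linear_combination hy
      simp only [mul_eq_zero] at this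
      grind only
    · have : x * y * (x + y) = 0 := by subst h; linear_combination hz
      simp only [mul_eq_zero] at this
      grind only
    · have : x * y * z = 0 := by rw [h] at hz; linear_combination -hz
      simp only [mul_eq_zero] at this
      grind only
  · grind

/-- The singular points of the arrangement of five planes. -/
lemma singular_iff_five {D : Type} [CommRing D] [IsDomain D] [Algebra ℂ D] (v : Fin 3 → D) :
    (∀ k, aeval v (pderiv k
      (X 0 * X 1 * X 2 * (X 0 + X 1 - X 2) * (X 0 - X 2) : MvPolynomial (Fin 3) ℂ)) = 0) ↔
      OnSixLines (v 0) (v 1) (v 2) := by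
  have : CharZero D := charZero_of_injective_algebraMap (algebraMap ℂ D).injective
  simp only [Fin.forall_fin_succ, Derivation.leibniz, map_add, map_sub, pderiv_X, OnSixLines]
  simp [Pi.single_apply]
  generalize v 0 = x
  generalize v 1 = y
  generalize v 2 = z
  constructor
  · rintro ⟨hx, hy, hz⟩
    have hy' : (x - z) * (x * y * z + (x + y - z) * (z * x)) = 0 := mul_eq_zero.2 hy
    -- Euler's formula; each of the resulting cases kills all but one term of a partial derivative.
    have hE : (5 : D) * (x * y * z * (x + y - z) * (x - z)) = 0 := by
      linear_combination x * hx + y * hy' + z * hz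
    simp only [mul_eq_zero, OfNat.ofNat_ne_zero, false_or] at hE
    rcases hE with (((h | h) | h) | h) | h
    · have : y * z * (y - z) * z = 0 := by subst h; linear_combination -hx
      simp only [mul_eq_zero] at this
      grind only
    · have : x * z * (x - z) * (x - z) = 0 := by subst h; linear_combination hy'
      simp only [mul_eq_zero] at this
      grind only
    · have : x * y * (x + y) * x = 0 := by subst h; linear_combination hz
      simp only [mul_eq_zero] at this
      grind only
    · have : x * y * z * (x - z) = 0 := by rw [h] at hz; linear_combination -hz
      simp only [mul_eq_zero] at this
      grind only
    · have : x * y * z * (x + y - z) = 0 := by rw [h] at hx; linear_combination hx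
      simp only [mul_eq_zero] at this
      grind only
  · grind

/-- For `Q₁ = z₁z₂z₃(z₁+z₂-z₃)` and `Q₂ = Q₁·(z₁-z₃)`, the radicals of the Jacobian
ideals agree, and both equal the intersection of the six codimension-two primes.
In particular the reduced Jacobian scheme does not determine the arrangement. -/
theorem radical_jacobian_does_not_determine_arrangement :
    (jac (X 0 * X 1 * X 2 * (X 0 + X 1 - X 2))).radical
        = (jac (X 0 * X 1 * X 2 * (X 0 + X 1 - X 2) * (X 0 - X 2))).radical ∧
      (jac (X 0 * X 1 * X 2 * (X 0 + X 1 - X 2))).radical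
        = Ideal.span ({X 0, X 1} : Set (MvPolynomial (Fin 3) ℂ))
          ⊓ Ideal.span ({X 0, X 1 - X 2} : Set (MvPolynomial (Fin 3) ℂ))
          ⊓ Ideal.span ({X 1, X 0 - X 2} : Set (MvPolynomial (Fin 3) ℂ))
          ⊓ Ideal.span ({X 0, X 2} : Set (MvPolynomial (Fin 3) ℂ))
          ⊓ Ideal.span ({X 1, X 2} : Set (MvPolynomial (Fin 3) ℂ))
          ⊓ Ideal.span ({X 0 + X 1, X 2} : Set (MvPolynomial (Fin 3) ℂ)) := by
  have h1 := radical_jac_eq _ fun D _ _ _ v => singular_iff_four (D := D) v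
  have h2 := radical_jac_eq _ fun D _ _ _ v => singular_iff_five (D := D) v
  exact ⟨h1.trans h2.symm, h1⟩
end
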